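/- arXiv:1106.4662 — 3 statements merged into one kernel-verified Lean document; each statement's English description precedes it below -/
import Mathlib

section
/- Suppose that for every j ∈ {1,…,M} we have 2|(Z_n)_j| ≤ ŵ_j, and let β̂ be a minimizer over a set B ⊆ ℝ^M of the penalized criterion b ↦ R_n(b) + pen(b). Then for every β ∈ B one has ‖h_{β̂} − h_0‖_n² ≤ ‖h_β − h_0‖_n² + 2 pen(β). -/
/-!
Deviations `h (X i) - hbar h t` have zero `Y`-weighted sum over `i` at every time in
`[0, 1]` (`sum_dev_mul`), so in the compensator of the noise `lam0 t + h0 (X i)` may be replaced by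
`h0 (X i) - hbar h0 t`, and the compensator is `⟨hⱼ, h₀⟩ₙ`. Expanding the square then gives
(`riskRn_eq`)
`Rₙ(β) = ‖h_β - h₀‖ₙ² - ‖h₀‖ₙ² - 2 ∑ⱼ βⱼ (Zₙ)ⱼ`.
Comparing the criterion at `βhat` and at `β` leaves the noise term `2 ∑ⱼ (βhatⱼ - βⱼ) (Zₙ)ⱼ`, which
is at most `pen(βhat) + pen(β)` because `2 |(Zₙ)ⱼ| ≤ wⱼ`.
-/

open MeasureTheory Finset

/-- Empirical mean of `h` over the at-risk individuals at time `t`: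
`h̄_Y(t) = (∑ᵢ h(Xᵢ) Yᵢ(t)) / (∑ᵢ Yᵢ(t))`. -/
noncomputable def hbar {n d : ℕ} (X : Fin n → (Fin d → ℝ)) (Y : Fin n → ℝ → ℝ)
    (h : (Fin d → ℝ) → ℝ) (t : ℝ) : ℝ :=
  (∑ i, h (X i) * Y i t) / (∑ i, Y i t)

/-- Empirical inner product `⟨g, h⟩ₙ`. -/
noncomputable def empInner {n d : ℕ} (X : Fin n → (Fin d → ℝ)) (Y : Fin n → ℝ → ℝ)
    (g h : (Fin d → ℝ) → ℝ) : ℝ :=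
  (1 / (n : ℝ)) * ∑ i, ∫ t in (0:ℝ)..1,
    (g (X i) - hbar X Y g t) * (h (X i) - hbar X Y h t) * Y i t

/-- Empirical squared norm `‖h‖ₙ²`. -/
noncomputable def empNormSq {n d : ℕ} (X : Fin n → (Fin d → ℝ)) (Y : Fin n → ℝ → ℝ)
    (h : (Fin d → ℝ) → ℝ) : ℝ := empInner X Y h h

/-- The linear combination `h_β = ∑ⱼ βⱼ hⱼ` over the dictionary. -/
noncomputable def hlin {M d : ℕ} (hdic : Fin M → (Fin d → ℝ) → ℝ) (β : Fin M → ℝ) :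
    (Fin d → ℝ) → ℝ := fun x => ∑ j, β j * hdic j x

/-- The least-squares risk `Rₙ(β)`. -/
noncomputable def riskRn {n M d : ℕ} (X : Fin n → (Fin d → ℝ)) (Y : Fin n → ℝ → ℝ)
    (N : Fin n → Measure ℝ) (hdic : Fin M → (Fin d → ℝ) → ℝ) (β : Fin M → ℝ) : ℝ :=
  (1 / (n : ℝ)) * ∑ i, ∫ t in (0:ℝ)..1,
      (hlin hdic β (X i) - ∑ j, β j * hbar X Y (hdic j) t) ^ 2 * Y i t
  - (2 / (n : ℝ)) * ∑ i, ∫ t in Set.Icc (0:ℝ) 1,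
      (hlin hdic β (X i) - ∑ j, β j * hbar X Y (hdic j) t) ∂(N i)

/-- The noise vector `(Zₙ)ⱼ`. -/
noncomputable def noiseZ {n M d : ℕ} (X : Fin n → (Fin d → ℝ)) (Y : Fin n → ℝ → ℝ)
    (N : Fin n → Measure ℝ) (hdic : Fin M → (Fin d → ℝ) → ℝ)
    (lam0 : ℝ → ℝ) (h0 : (Fin d → ℝ) → ℝ) (j : Fin M) : ℝ :=
  (1 / (n : ℝ)) * ∑ i,
    ((∫ t in Set.Icc (0:ℝ) 1, (hdic j (X i) - hbar X Y (hdic j) t) ∂(N i)) -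
      ∫ t in (0:ℝ)..1, (hdic j (X i) - hbar X Y (hdic j) t) * (lam0 t + h0 (X i)) * Y i t)

/-- Weighted ℓ¹-penalty `pen(b) = ∑ⱼ ŵⱼ |bⱼ|`. -/
noncomputable def penW {M : ℕ} (w b : Fin M → ℝ) : ℝ := ∑ j, w j * |b j|

/-- The empirical mean is a weighted average, hence bounded uniformly in time (at times where the
total weight vanishes, the convention `x / 0 = 0` keeps the bound true). -/
lemma abs_hbar_le {n d : ℕ} (X : Fin n → (Fin d → ℝ)) (Y : Fin n → ℝ → ℝ)
    (hYrange : ∀ i t, Y i t ∈ Set.Icc (0:ℝ) 1) (h : (Fin d → ℝ) → ℝ) (t : ℝ) :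
    |hbar X Y h t| ≤ ∑ i, |h (X i)| := by
  have hY0 : ∀ i, 0 ≤ Y i t := fun i => (hYrange i t).1
  have hS : 0 ≤ ∑ i, Y i t := Finset.sum_nonneg fun i _ => hY0 i
  unfold hbar
  rw [abs_div, abs_of_nonneg hS]
  refine div_le_of_le_mul₀ hS (Finset.sum_nonneg fun i _ => abs_nonneg _) ?_
  rw [Finset.sum_mul]
  refine (Finset.abs_sum_le_sum_abs _ _).trans (Finset.sum_le_sum fun i _ => ?_)
  rw [abs_mul, abs_of_nonneg (hY0 i)]
  exact mul_le_mul_of_nonneg_left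
    (Finset.single_le_sum (f := fun k => Y k t) (fun k _ => hY0 k) (Finset.mem_univ i))
    (abs_nonneg _)

lemma measurable_hbar {n d : ℕ} (X : Fin n → (Fin d → ℝ)) (Y : Fin n → ℝ → ℝ)
    (hYmeas : ∀ i, Measurable (Y i)) (h : (Fin d → ℝ) → ℝ) : Measurable (hbar X Y h) := by
  unfold hbar
  fun_prop

lemma hbar_hlin {n M d : ℕ} (X : Fin n → (Fin d → ℝ)) (Y : Fin n → ℝ → ℝ)
    (hdic : Fin M → (Fin d → ℝ) → ℝ) (β : Fin M → ℝ) (t : ℝ) :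
    hbar X Y (hlin hdic β) t = ∑ j, β j * hbar X Y (hdic j) t := by
  simp only [hbar, hlin, ← mul_div_assoc, ← Finset.sum_div, Finset.sum_mul, Finset.mul_sum]
  rw [Finset.sum_comm]
  simp only [mul_assoc]

lemma hbar_sub {n d : ℕ} (X : Fin n → (Fin d → ℝ)) (Y : Fin n → ℝ → ℝ)
    (g h : (Fin d → ℝ) → ℝ) (t : ℝ) :
    hbar X Y (fun x => g x - h x) t = hbar X Y g t - hbar X Y h t := by
  simp only [hbar, sub_mul, Finset.sum_sub_distrib, sub_div]

/-- Deviations from the empirical mean have zero weighted sum. -/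
lemma sum_dev_mul {n d : ℕ} (X : Fin n → (Fin d → ℝ)) (Y : Fin n → ℝ → ℝ)
    (h : (Fin d → ℝ) → ℝ) (t : ℝ) (ht : 0 < ∑ i, Y i t) :
    ∑ i, (h (X i) - hbar X Y h t) * Y i t = 0 := by
  simp only [sub_mul, Finset.sum_sub_distrib, ← Finset.mul_sum]
  rw [hbar, div_mul_cancel₀ _ ht.ne', sub_self]

/-- A deviation is bounded and measurable, so multiplying by it preserves integrability. -/
lemma dev_integrable_mul {n d : ℕ} (X : Fin n → (Fin d → ℝ)) (Y : Fin n → ℝ → ℝ)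
    (hYmeas : ∀ i, Measurable (Y i)) (hYrange : ∀ i t, Y i t ∈ Set.Icc (0:ℝ) 1)
    (h : (Fin d → ℝ) → ℝ) (i : Fin n) {μ : Measure ℝ} {f : ℝ → ℝ} (hf : Integrable f μ) :
    Integrable (fun t => (h (X i) - hbar X Y h t) * f t) μ := by
  refine hf.bdd_mul (c := |h (X i)| + ∑ i, |h (X i)|)
    ((measurable_hbar X Y hYmeas h).const_sub _).aestronglyMeasurable (.of_forall fun t => ?_)
  rw [Real.norm_eq_abs]
  exact (abs_sub _ _).trans (by gcongr; exact abs_hbar_le X Y hYrange h t)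

/-- The bias–noise decomposition of the risk: up to a constant independent of `β`, it is the squared
distance to `h0` minus twice the pairing with the noise. The baseline `lam0` drops out by
`sum_dev_mul`. -/
lemma riskRn_eq {n M d : ℕ} (hn : 1 ≤ n) (X : Fin n → (Fin d → ℝ)) (Y : Fin n → ℝ → ℝ)
    (hYmeas : ∀ i, Measurable (Y i))
    (hYrange : ∀ i t, Y i t ∈ Set.Icc (0:ℝ) 1)
    (hYpos : ∀ t ∈ Set.Icc (0:ℝ) 1, 0 < ∑ i, Y i t)
    (N : Fin n → Measure ℝ) (hN : ∀ i, IsFiniteMeasure (N i))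
    (hdic : Fin M → (Fin d → ℝ) → ℝ)
    (lam0 : ℝ → ℝ) (hlam_int : IntervalIntegrable lam0 volume 0 1)
    (h0 : (Fin d → ℝ) → ℝ) (β : Fin M → ℝ) :
    riskRn X Y N hdic β = empNormSq X Y (fun x => hlin hdic β x - h0 x) - empNormSq X Y h0
      - 2 * ∑ j, β j * noiseZ X Y N hdic lam0 h0 j := by
  have hdev : ∀ i t, hlin hdic β (X i) - ∑ j, β j * hbar X Y (hdic j) t
      = ∑ j, β j * (hdic j (X i) - hbar X Y (hdic j) t) := fun i t => by
    simp only [hlin, mul_sub, Finset.sum_sub_distrib]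
  have hYb : ∀ i {f : ℝ → ℝ}, Integrable f (volume.restrict (Set.uIoc 0 1)) →
      Integrable (fun t => f t * Y i t) (volume.restrict (Set.uIoc 0 1)) := fun i f hf =>
    hf.mul_bdd (c := 1) (hYmeas i).aestronglyMeasurable (.of_forall fun t => by
      rw [Real.norm_eq_abs, abs_of_nonneg (hYrange i t).1]; exact (hYrange i t).2)
  have hone : ∀ c : ℝ, Integrable (fun _ : ℝ => c) (volume.restrict (Set.uIoc 0 1)) :=
    fun c => intervalIntegrable_iff.1 (intervalIntegrable_const (c := c))
  have hgg : ∀ (g g' : (Fin d → ℝ) → ℝ) i, IntervalIntegrable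
      (fun t => (g (X i) - hbar X Y g t) * (g' (X i) - hbar X Y g' t) * Y i t) volume 0 1 := by
    intro g g' i
    refine intervalIntegrable_iff.2 (hYb i (dev_integrable_mul X Y hYmeas hYrange g i ?_))
    simpa using dev_integrable_mul X Y hYmeas hYrange g' i (hone 1)
  have hgl : ∀ (g : (Fin d → ℝ) → ℝ) i, IntervalIntegrable
      (fun t => (g (X i) - hbar X Y g t) * (lam0 t + h0 (X i)) * Y i t) volume 0 1 := by
    intro g i
    exact intervalIntegrable_iff.2 (hYb i (dev_integrable_mul X Y hYmeas hYrange g i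
      ((intervalIntegrable_iff.1 hlam_int).add (hone _))))
  -- the counting-measure integrals are linear in `β`
  have hA : ∀ i, ∫ t in Set.Icc (0:ℝ) 1,
      (hlin hdic β (X i) - ∑ j, β j * hbar X Y (hdic j) t) ∂(N i)
      = ∑ j, β j * ∫ t in Set.Icc (0:ℝ) 1, (hdic j (X i) - hbar X Y (hdic j) t) ∂(N i) := by
    intro i
    have := hN i
    simp only [hdev]
    rw [integral_finsetSum]
    · simp only [integral_const_mul]
    · intro j _
      refine Integrable.const_mul ?_ _
      simpa using dev_integrable_mul X Y hYmeas hYrange (hdic j) i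
        (integrable_const (μ := (N i).restrict (Set.Icc 0 1)) (1:ℝ))
  have hC : ∀ i, ∑ j, β j * ∫ t in (0:ℝ)..1,
      (hdic j (X i) - hbar X Y (hdic j) t) * (lam0 t + h0 (X i)) * Y i t
      = ∫ t in (0:ℝ)..1, (hlin hdic β (X i) - hbar X Y (hlin hdic β) t)
        * (lam0 t + h0 (X i)) * Y i t := by
    intro i
    simp only [hbar_hlin, hdev, Finset.sum_mul]
    rw [intervalIntegral.integral_finsetSum]
    · simp only [mul_assoc, intervalIntegral.integral_const_mul]
    · intro j _
      simpa only [mul_assoc] using (hgl (hdic j) i).const_mul (β j)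
  have hZ : ∑ j, β j * noiseZ X Y N hdic lam0 h0 j = (1 / (n : ℝ)) *
      ((∑ i, ∫ t in Set.Icc (0:ℝ) 1,
          (hlin hdic β (X i) - ∑ j, β j * hbar X Y (hdic j) t) ∂(N i))
        - ∑ i, ∫ t in (0:ℝ)..1, (hlin hdic β (X i) - hbar X Y (hlin hdic β) t)
          * (lam0 t + h0 (X i)) * Y i t) := by
    simp only [hA, ← hC, noiseZ]
    rw [← Finset.sum_sub_distrib]
    simp only [← Finset.sum_sub_distrib, ← mul_sub]
    rw [Finset.sum_comm, Finset.mul_sum]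
    refine Finset.sum_congr rfl fun j _ => ?_
    rw [← Finset.mul_sum]
    ring
  -- Expand the square; the two sides differ by terms that `sum_dev_mul` makes vanish at each `t`.
  have hQ : (∑ i, ∫ t in (0:ℝ)..1,
        (hlin hdic β (X i) - hbar X Y (hlin hdic β) t)
          * (hlin hdic β (X i) - hbar X Y (hlin hdic β) t) * Y i t)
      - 2 * ∑ i, ∫ t in (0:ℝ)..1, (hlin hdic β (X i) - hbar X Y (hlin hdic β) t)
          * (lam0 t + h0 (X i)) * Y i t
      = (∑ i, ∫ t in (0:ℝ)..1,
        ((hlin hdic β (X i) - h0 (X i)) - hbar X Y (fun x => hlin hdic β x - h0 x) t)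
        * ((hlin hdic β (X i) - h0 (X i)) - hbar X Y (fun x => hlin hdic β x - h0 x) t) * Y i t)
      - ∑ i, ∫ t in (0:ℝ)..1,
        (h0 (X i) - hbar X Y h0 t) * (h0 (X i) - hbar X Y h0 t) * Y i t := by
    set g := hlin hdic β
    have hsum : ∀ {f : Fin n → ℝ → ℝ}, (∀ i, IntervalIntegrable (f i) volume 0 1) →
        IntervalIntegrable (fun t => ∑ i, f i t) volume 0 1 := fun {f} hf => by
      simpa only [Finset.sum_fn] using IntervalIntegrable.sum Finset.univ fun i _ => hf i
    have e1 := fun i => hgg g g i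
    have e2 := fun i => hgl g i
    have e3 := fun i => hgg (fun x => g x - h0 x) (fun x => g x - h0 x) i
    have e4 := fun i => hgg h0 h0 i
    rw [← intervalIntegral.integral_finsetSum fun i _ => e1 i,
      ← intervalIntegral.integral_finsetSum fun i _ => e2 i,
      ← intervalIntegral.integral_finsetSum fun i _ => e3 i,
      ← intervalIntegral.integral_finsetSum fun i _ => e4 i,
      ← intervalIntegral.integral_const_mul,
      ← intervalIntegral.integral_sub (hsum e1)
        ((hsum e2).const_mul 2),
      ← intervalIntegral.integral_sub (hsum e3)
        (hsum e4)]
    refine intervalIntegral.integral_congr fun t ht => ?_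
    rw [Set.uIcc_of_le zero_le_one] at ht
    have hz := sum_dev_mul X Y g t (hYpos t ht)
    have hz2 : ∑ i, 2 * (lam0 t + hbar X Y h0 t) * ((g (X i) - hbar X Y g t) * Y i t) = 0 := by
      rw [← Finset.mul_sum, hz, mul_zero]
    simp only [hbar_sub]
    rw [← sub_eq_zero, ← neg_eq_zero, ← hz2]
    rw [Finset.mul_sum, ← Finset.sum_sub_distrib, ← Finset.sum_sub_distrib,
      ← Finset.sum_sub_distrib, ← Finset.sum_neg_distrib]
    exact Finset.sum_congr rfl fun i _ => by ring
  rw [hZ]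
  simp only [riskRn, empNormSq, empInner]
  rw [← mul_sub, ← hQ]
  -- In `riskRn` the counting-measure term is parsed inside `(1 / n) * ∑ i, ∫ t in 0..1`. It is
  -- constant in `i` and `t`, and this average over `i` and `t` leaves constants unchanged.
  have hn0 : (n : ℝ) ≠ 0 := Nat.cast_ne_zero.2 (by omega)
  have hsplit : ∀ c : ℝ, (1 / (n : ℝ)) * ∑ i, ∫ t in (0:ℝ)..1,
      ((hlin hdic β (X i) - ∑ j, β j * hbar X Y (hdic j) t) ^ 2 * Y i t - c)
      = (1 / (n : ℝ)) * (∑ i, ∫ t in (0:ℝ)..1,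
        (hlin hdic β (X i) - hbar X Y (hlin hdic β) t)
          * (hlin hdic β (X i) - hbar X Y (hlin hdic β) t) * Y i t) - c := by
    intro c
    have hi : ∀ i, ∫ t in (0:ℝ)..1,
        ((hlin hdic β (X i) - ∑ j, β j * hbar X Y (hdic j) t) ^ 2 * Y i t - c)
        = (∫ t in (0:ℝ)..1, (hlin hdic β (X i) - hbar X Y (hlin hdic β) t)
          * (hlin hdic β (X i) - hbar X Y (hlin hdic β) t) * Y i t) - c := by
      intro i
      simp only [← hbar_hlin, pow_two]
      rw [intervalIntegral.integral_sub (hgg _ _ i) intervalIntegrable_const]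
      simp
    simp only [hi, Finset.sum_sub_distrib, Finset.sum_const, Finset.card_univ, Fintype.card_fin,
      nsmul_eq_mul]
    rw [mul_sub, ← mul_assoc (1 / (n : ℝ)) n c, one_div_mul_cancel hn0, one_mul]
  rw [hsplit]
  ring

/-- **Theorem 1 (slow oracle inequality), deterministic core.**
On the event where `2 |(Zₙ)ⱼ| ≤ ŵⱼ` for all `j`, any minimizer `β̂` over `B` of
`Rₙ(b) + pen(b)` satisfies, for every `β ∈ B`,
`‖h_{β̂} − h₀‖ₙ² ≤ ‖h_β − h₀‖ₙ² + 2 pen(β)`. -/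
theorem slow_oracle_inequality
    {n M d : ℕ} (hn : 1 ≤ n) (hM : 1 ≤ M) (hd1 : 1 ≤ d)
    (X : Fin n → (Fin d → ℝ)) (Y : Fin n → ℝ → ℝ)
    (hYmeas : ∀ i, Measurable (Y i))
    (hYrange : ∀ i t, Y i t ∈ Set.Icc (0:ℝ) 1)
    (hYpos : ∀ t ∈ Set.Icc (0:ℝ) 1, 0 < ∑ i, Y i t)
    (N : Fin n → Measure ℝ) (hN : ∀ i, IsFiniteMeasure (N i))
    (hdic : Fin M → (Fin d → ℝ) → ℝ)
    (lam0 : ℝ → ℝ) (hlam_int : IntervalIntegrable lam0 volume 0 1)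
    (hlam_nonneg : ∀ t, 0 ≤ lam0 t)
    (h0 : (Fin d → ℝ) → ℝ) (hh0 : ∀ x, 0 ≤ h0 x)
    (w : Fin M → ℝ) (hw : ∀ j, 0 < w j)
    (hnoise : ∀ j, 2 * |noiseZ X Y N hdic lam0 h0 j| ≤ w j)
    (B : Set (Fin M → ℝ)) (βhat : Fin M → ℝ) (hβhatB : βhat ∈ B)
    (hmin : ∀ b ∈ B, riskRn X Y N hdic βhat + penW w βhat ≤ riskRn X Y N hdic b + penW w b) :
    ∀ β ∈ B,
      empNormSq X Y (fun x => hlin hdic βhat x - h0 x) ≤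
        empNormSq X Y (fun x => hlin hdic β x - h0 x) + 2 * penW w β := by
  intro β hβ
  have hm := hmin β hβ
  rw [riskRn_eq hn X Y hYmeas hYrange hYpos N hN hdic lam0 hlam_int h0,
    riskRn_eq hn X Y hYmeas hYrange hYpos N hN hdic lam0 hlam_int h0] at hm
  have hZ : ∀ b : Fin M → ℝ, |2 * ∑ j, b j * noiseZ X Y N hdic lam0 h0 j| ≤ penW w b := by
    intro b
    rw [Finset.mul_sum, penW]
    refine (Finset.abs_sum_le_sum_abs _ _).trans (Finset.sum_le_sum fun j _ => ?_)
    rw [abs_mul, abs_mul, abs_two]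
    nlinarith [mul_le_mul_of_nonneg_right (hnoise j) (abs_nonneg (b j))]
  have h1 := (abs_le.1 (hZ βhat)).2
  have h2 := (abs_le.1 (hZ β)).1
  linarith
end

section
/- Let n ≥ 1 be an integer and let u ∈ ℝ, x > 0, 0 < v ≤ w, and θ, θ̂ ≥ 0 be real numbers. If u ≤ √(2wθx/(vn)) + x/(3n) and |θ̂ − θ| ≤ √(2wθx/(vn)) + x/(3n), then u ≤ 2√(wxθ̂/(vn)) + (2√((w/v)(w/v + 1/3)) + 1/3) · x/n. -/
/-!
Write `r = w / v`, `y = x / n` and `S = √(2 r θ y)`. The second hypothesis gives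
`θ ≤ θ̂ + S + y / 3`, and the AM-GM bound `S ≤ θ / 2 + r y` absorbs `S` to give
`θ ≤ 2 θ̂ + 2 (r + 1 / 3) y`. Hence `S² = 2 r θ y ≤ 4 r y θ̂ + 4 r (r + 1 / 3) y²`, and
subadditivity of the square root yields `S ≤ 2 √(r y θ̂) + 2 √(r (r + 1 / 3)) y`.
-/

/-- **Equation (bernstein-inclusion-trick1).** If
`u ≤ √(2wθx/(vn)) + x/(3n)` and `|θ̂ − θ| ≤ √(2wθx/(vn)) + x/(3n)`, then
`u ≤ 2√(wxθ̂/(vn)) + (2√((w/v)(w/v + 1/3)) + 1/3) x/n`. -/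
theorem bernstein_inclusion_trick
    (n : ℕ) (hn : 1 ≤ n) (u x v w θ θhat : ℝ)
    (hx : 0 < x) (hv : 0 < v) (hvw : v ≤ w) (hθ : 0 ≤ θ) (hθhat : 0 ≤ θhat)
    (h1 : u ≤ Real.sqrt (2 * w * θ * x / (v * n)) + x / (3 * n))
    (h2 : |θhat - θ| ≤ Real.sqrt (2 * w * θ * x / (v * n)) + x / (3 * n)) :
    u ≤ 2 * Real.sqrt (w * x * θhat / (v * n)) +
        (2 * Real.sqrt ((w / v) * (w / v + 1 / 3)) + 1 / 3) * x / n := by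
  have hn0 : (0 : ℝ) < n := by exact_mod_cast hn
  have hw : 0 < w := hv.trans_le hvw
  have e1 : 2 * w * θ * x / (v * n) = 2 * (w / v) * θ * (x / n) := by field_simp
  have e2 : w * x * θhat / (v * n) = (w / v) * (x / n) * θhat := by field_simp
  have e3 : x / (3 * (n : ℝ)) = (x / n) / 3 := by field_simp
  rw [e2, mul_div_assoc _ x]
  rw [e1, e3] at h1 h2
  have hr : 0 < w / v := div_pos hw hv
  have hy : 0 < x / (n : ℝ) := div_pos hx hn0
  generalize w / v = r at *
  generalize x / (n : ℝ) = y at *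
  have hS := Real.sq_sqrt (show 0 ≤ 2 * r * θ * y by positivity)
  have hA := Real.sq_sqrt (show 0 ≤ r * y * θhat by positivity)
  have hB := Real.sq_sqrt (show 0 ≤ r * (r + 1 / 3) by positivity)
  have hA0 := Real.sqrt_nonneg (r * y * θhat)
  have hB0 := Real.sqrt_nonneg (r * (r + 1 / 3))
  have hS0 := Real.sqrt_nonneg (2 * r * θ * y)
  generalize √(2 * r * θ * y) = S at *
  generalize √(r * y * θhat) = A at *
  generalize √(r * (r + 1 / 3)) = B at *
  have h3 : θ ≤ θhat + S + y / 3 := by linarith [(abs_le.mp h2).1]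
  have amgm : S ≤ θ / 2 + r * y := by
    refine abs_le_of_sq_le_sq' ?_ (by positivity) |>.2
    nlinarith [sq_nonneg (θ / 2 - r * y)]
  have h4 : θ ≤ 2 * θhat + 2 * (r + 1 / 3) * y := by linarith
  have key : S ≤ 2 * A + 2 * B * y := by
    refine abs_le_of_sq_le_sq' ?_ (by positivity) |>.2
    calc S ^ 2 = 2 * r * y * θ := by rw [hS]; ring
      _ ≤ 2 * r * y * (2 * θhat + 2 * (r + 1 / 3) * y) := by gcongr
      _ = 4 * A ^ 2 + 4 * B ^ 2 * y ^ 2 := by rw [hA, hB]; ring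
      _ ≤ (2 * A + 2 * B * y) ^ 2 := by
        have : 0 ≤ A * B * y := by positivity
        linarith [show (2 * A + 2 * B * y) ^ 2
          = 4 * A ^ 2 + 4 * B ^ 2 * y ^ 2 + 8 * (A * B * y) by ring]
  linarith
end

section
/- Let n ≥ 1 be an integer and let x > 0, 0 < v ≤ w, and θ, θ̂ ≥ 0 be real numbers. If |θ̂ − θ| ≤ √(2wθx/(vn)) + x/(3n), then θ ≤ 2θ̂ + 2(w/v + 1/3) · x/n and θ̂ ≤ 2θ + 2(1/3 + √((w/v)(1/3 + w/v)) + 2w/v) · x/n. -/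
/-!
With `r = w / v` and `y = x / n`, the deviation term is `√(2 r θ y)`, and the arithmetic-geometric
mean inequality applied to `θ` and `2 r y` bounds it by `θ / 2 + r y`. Hence
`|θhat - θ| ≤ θ / 2 + r y + y / 3`, and both bounds follow by linear arithmetic. The square root
in the second bound is only used through its nonnegativity.
-/

/-- **Two-sided comparison of predictable and optional variations.** If
`|θ̂ − θ| ≤ √(2wθx/(vn)) + x/(3n)`, then `θ ≤ 2θ̂ + 2(w/v + 1/3)x/n` and
`θ̂ ≤ 2θ + 2(1/3 + √((w/v)(1/3 + w/v)) + 2w/v)x/n`. -/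
theorem variation_comparison
    (n : ℕ) (hn : 1 ≤ n) (x v w θ θhat : ℝ)
    (hx : 0 < x) (hv : 0 < v) (hvw : v ≤ w) (hθ : 0 ≤ θ) (hθhat : 0 ≤ θhat)
    (h : |θhat - θ| ≤ Real.sqrt (2 * w * θ * x / (v * n)) + x / (3 * n)) :
    θ ≤ 2 * θhat + 2 * (w / v + 1 / 3) * x / n ∧
      θhat ≤ 2 * θ +
        2 * (1 / 3 + Real.sqrt ((w / v) * (1 / 3 + w / v)) + 2 * w / v) * x / n := by
  have hn' : (0 : ℝ) < n := by exact_mod_cast hn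
  have hr : 0 < w / v := div_pos (hv.trans_le hvw) hv
  have hy : 0 < x / n := div_pos hx hn'
  have hs : 0 ≤ Real.sqrt ((w / v) * (1 / 3 + w / v)) := Real.sqrt_nonneg _
  have e1 : 2 * w * θ * x / (v * n) = 2 * (w / v) * θ * (x / n) := by field_simp
  have e2 : x / (3 * n) = (x / n) / 3 := by field_simp
  have e3 : 2 * (w / v + 1 / 3) * x / n = 2 * (w / v + 1 / 3) * (x / n) := mul_div_assoc _ _ _
  have e4 (s : ℝ) : 2 * (1 / 3 + s + 2 * w / v) * x / n
      = 2 * (1 / 3 + s + 2 * (w / v)) * (x / n) := by rw [mul_div_assoc, mul_div_assoc 2 w v]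
  rw [e1, e2] at h
  rw [e3, e4]
  generalize w / v = r at *
  generalize x / (n : ℝ) = y at *
  have hry : 0 < r * y := mul_pos hr hy
  have amgm : Real.sqrt (2 * r * θ * y) ≤ θ / 2 + r * y := by
    refine Real.sqrt_le_iff.mpr ⟨by positivity, ?_⟩
    nlinarith [sq_nonneg (θ / 2 - r * y)]
  obtain ⟨h1, h2⟩ := abs_le.mp h
  have hsy := mul_nonneg hs hy.le
  constructor <;> nlinarith
end
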